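/- Let M be an (A,c)-duplex and let I be an injective ℤ/2ℤ-graded A-submodule of M such that the differential d of M is injective on I and I ∩ d(I) = 0. Then M is isomorphic in the homotopy category K₂(A,c) to its quotient by the subduplex generated by I, namely to the duplex ⋯ → M⁰/(I⁰ ⊕ d(I¹)) → M¹/(I¹ ⊕ d(I⁰)) → ⋯ with the induced differential. -/

import Mathlib

/-!
The proof builds a contraction of `M` onto the subduplex `J = I + d(I)`.  Write `e i` for the
projection of `M` onto its degree `i` part and `σ = e 0 - e 1` for the parity involution.  Then
`d ∘ σ` is `A`-linear, and by the hypotheses on `I` the `A`-linear map `I × I → M`,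
`(x, y) ↦ x + d (σ y)` is injective.  Injectivity of `I` extends the second projection along it to
an `A`-linear map `H : M → I`.  The twisted odd part `h = e 0 ∘ H ∘ e 1 - e 1 ∘ H ∘ e 0` of `H`
is then a degree 1 supercommuting map `M → M` with values in `I` such that `h x = 0` and
`h (d x) = x` for `x ∈ I`.

Hence `p = h d + d h` is an endomorphism of the duplex `M` which takes values in `J` and is the
identity on `J`.  So `M = J ⊕ ker p` as duplexes, the quotient `M / J` is realised as the subduplex
`ker p` of `M` with projection `1 - p`, and the inclusion `ker p → M` is a homotopy inverse: one
composite is the identity, the other differs from it by `-p = (-h) d + d (-h)`.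
-/


/-!
STATEMENT 2: If M is an (A,c)-duplex and I an injective ℤ/2ℤ-graded A-submodule
of M such that d is injective on I and I ∩ d(I) = 0, then M is isomorphic in the
homotopy category K₂(A,c) to its quotient by the subduplex generated by I.
-/

universe u v

structure Duplex (A : Type u) [Ring A] (𝒜 : ZMod 2 → AddSubgroup A) (c : A) where
  carrier : Type v
  [acg : AddCommGroup carrier]
  [mod : Module A carrier]
  grading : ZMod 2 → AddSubgroup carrier
  decomp : DirectSum.IsInternal grading
  smul_mem : ∀ {i j : ZMod 2} {a : A} {m : carrier},
    a ∈ 𝒜 i → m ∈ grading j → a • m ∈ grading (i + j)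
  d : carrier →+ carrier
  d_degree : ∀ (i : ZMod 2), ∀ m ∈ grading i, d m ∈ grading (i + 1)
  d_sq : ∀ m : carrier, d (d m) = c • m
  d_supercomm : ∀ (i : ZMod 2) (a : A), a ∈ 𝒜 i → ∀ m : carrier,
    d (a • m) = ((-1 : ℤ) ^ i.val) • (a • d m)

attribute [instance] Duplex.acg Duplex.mod

variable {A : Type u} [Ring A] {𝒜 : ZMod 2 → AddSubgroup A} {c : A}

def IsDuplexMorphism (M N : Duplex A 𝒜 c) (f : M.carrier →ₗ[A] N.carrier) : Prop :=
  (∀ i : ZMod 2, ∀ m ∈ M.grading i, f m ∈ N.grading i) ∧ ∀ m, f (M.d m) = N.d (f m)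

def IsNullHomotopic (M N : Duplex A 𝒜 c) (f : M.carrier →ₗ[A] N.carrier) : Prop :=
  ∃ h : M.carrier →+ N.carrier,
    (∀ i : ZMod 2, ∀ m ∈ M.grading i, h m ∈ N.grading (i + 1)) ∧
    (∀ (i : ZMod 2) (a : A), a ∈ 𝒜 i → ∀ m : M.carrier,
      h (a • m) = ((-1 : ℤ) ^ i.val) • (a • h m)) ∧
    (∀ m : M.carrier, f m = h (M.d m) + N.d (h m))

/-- Two duplexes are isomorphic in the homotopy category `K₂(A,c)` if there are
morphisms between them whose composites are homotopic to the identities. -/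
def HomotopyIso (M N : Duplex A 𝒜 c) : Prop :=
  ∃ (f : M.carrier →ₗ[A] N.carrier) (g : N.carrier →ₗ[A] M.carrier),
    IsDuplexMorphism M N f ∧ IsDuplexMorphism N M g ∧
    IsNullHomotopic M M (g ∘ₗ f - LinearMap.id) ∧
    IsNullHomotopic N N (f ∘ₗ g - LinearMap.id)

theorem zmod2_cases : ∀ i : ZMod 2, i = 0 ∨ i = 1 := by decide

/-- `e` is the family of projections onto the two homogeneous parts `G 0`, `G 1` of `N`. -/
structure IsProjFamily {N : Type v} [AddCommGroup N] (G : ZMod 2 → AddSubgroup N)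
    (e : ZMod 2 → N →+ N) : Prop where
  mem : ∀ i n, e i n ∈ G i
  add : ∀ n, e 0 n + e 1 n = n
  same : ∀ i, ∀ n ∈ G i, e i n = n
  ne : ∀ i j, i ≠ j → ∀ n ∈ G i, e j n = 0

theorem exists_isProjFamily {N : Type v} [AddCommGroup N] {G : ZMod 2 → AddSubgroup N}
    (hG : DirectSum.IsInternal G) : ∃ e, IsProjFamily G e := by
  classical
  let _ := hG.chooseDecomposition
  refine ⟨fun i => (G i).subtype.comp ((DFinsupp.evalAddMonoidHom i).comp
    (DirectSum.decomposeAddEquiv G).toAddMonoidHom), ?_, ?_, ?_, ?_⟩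
  · intro i n
    exact (DirectSum.decompose G n i).2
  · intro n
    have h : ∑ i : ZMod 2, (DirectSum.decompose G n i : N) = n := by
      conv_rhs => rw [← DirectSum.sum_support_decompose G n]
      symm
      apply Finset.sum_subset (Finset.subset_univ _)
      intro i _ hi
      simpa using hi
    rw [show (Finset.univ : Finset (ZMod 2)) = {0, 1} by decide,
      Finset.sum_pair (by decide)] at h
    exact h
  · intro i n hn
    exact DirectSum.decompose_of_mem_same G hn
  · intro i j hij n hn
    exact DirectSum.decompose_of_mem_ne G hn hij

theorem IsProjFamily.isInternal {N : Type v} [AddCommGroup N] {G : ZMod 2 → AddSubgroup N}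
    {e : ZMod 2 → N →+ N} (he : IsProjFamily G e) : DirectSum.IsInternal G := by
  classical
  have key : ∀ (i : ZMod 2) (x : DirectSum (ZMod 2) fun i => G i),
      e i (DirectSum.coeAddMonoidHom G x) = x i := by
    intro i x
    induction x using DirectSum.induction_on with
    | zero => simp
    | of j x =>
      rw [DirectSum.coeAddMonoidHom_of]
      by_cases h : j = i
      · subst h
        rw [he.same _ _ x.2, DirectSum.of_eq_same]
      · rw [he.ne j i h _ x.2, DirectSum.of_eq_of_ne _ _ _ (Ne.symm h)]
        rfl
    | add x y hx hy => simp [hx, hy]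
  constructor
  · intro x y hxy
    refine DFinsupp.ext fun i => Subtype.ext ?_
    have h := congrArg (e i) hxy
    rw [key, key] at h
    exact h
  · intro n
    refine ⟨DirectSum.of (fun i => G i) 0 ⟨e 0 n, he.mem 0 n⟩ +
      DirectSum.of (fun i => G i) 1 ⟨e 1 n, he.mem 1 n⟩, ?_⟩
    rw [map_add, DirectSum.coeAddMonoidHom_of, DirectSum.coeAddMonoidHom_of]
    exact he.add n

/-- A homogeneous additive map of degree `k` intertwines the projections `e i` and `e (k + i)`. -/
theorem IsProjFamily.map_proj {N : Type v} [AddCommGroup N] {G : ZMod 2 → AddSubgroup N}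
    {e : ZMod 2 → N →+ N} (he : IsProjFamily G e) (f : N →+ N) (k : ZMod 2)
    (hf : ∀ i, ∀ n ∈ G i, f n ∈ G (k + i)) (i : ZMod 2) (n : N) :
    e (k + i) (f n) = f (e i n) := by
  have h : ∀ j, e (k + i) (f (e j n)) = if j = i then f (e i n) else 0 := by
    intro j
    split_ifs with hj
    · subst hj
      exact he.same _ _ (hf _ _ (he.mem _ _))
    · exact he.ne (k + j) (k + i) (fun hh => hj (add_left_cancel hh)) _ (hf _ _ (he.mem _ _))
  conv_lhs => rw [← he.add n, map_add, map_add, h, h]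
  obtain rfl | rfl := zmod2_cases i <;> simp

/-- An additive map commuting with homogeneous scalars is `A`-linear. -/
theorem map_smul_of_homogeneous [GradedRing 𝒜] {N P : Type v} [AddCommGroup N] [Module A N]
    [AddCommGroup P] [Module A P] (f : N →+ P)
    (hf : ∀ (i : ZMod 2) (a : A), a ∈ 𝒜 i → ∀ n, f (a • n) = a • f n) (a : A) (n : N) :
    f (a • n) = a • f n := by
  induction a using DirectSum.Decomposition.inductionOn 𝒜 with
  | zero => simp
  | homogeneous a => exact hf _ _ a.2 n
  | add a b ha hb => simp [add_smul, ha, hb]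

theorem Duplex.proj_smul {M : Duplex.{u, v} A 𝒜 c} {e : ZMod 2 → M.carrier →+ M.carrier}
    (he : IsProjFamily M.grading e) {k : ZMod 2} {a : A} (ha : a ∈ 𝒜 k) (i : ZMod 2)
    (m : M.carrier) : e (k + i) (a • m) = a • e i m :=
  he.map_proj (DistribSMul.toAddMonoidHom M.carrier a) k (fun _ _ hn => M.smul_mem ha hn) i m

theorem Duplex.proj_d {M : Duplex.{u, v} A 𝒜 c} {e : ZMod 2 → M.carrier →+ M.carrier}
    (he : IsProjFamily M.grading e) (i : ZMod 2) (m : M.carrier) :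
    e (1 + i) (M.d m) = M.d (e i m) :=
  he.map_proj M.d 1 (fun j n hn => by rw [add_comm]; exact M.d_degree j n hn) i m

/-- The subduplex carried by an `A`-submodule `K` stable under `d` and under the projections `e i`,
with the induced grading. -/
def Duplex.sub (M : Duplex.{u, v} A 𝒜 c) (K : Submodule A M.carrier)
    (e : ZMod 2 → M.carrier →+ M.carrier) (he : IsProjFamily M.grading e)
    (hKe : ∀ i, ∀ m ∈ K, e i m ∈ K) (hKd : ∀ m ∈ K, M.d m ∈ K) : Duplex.{u, v} A 𝒜 c where
  carrier := K
  grading i := (M.grading i).comap K.subtype.toAddMonoidHom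
  decomp := by
    refine IsProjFamily.isInternal (e := fun i =>
      ((e i).comp K.subtype.toAddMonoidHom).codRestrict K fun m => hKe i m m.2) ⟨?_, ?_, ?_, ?_⟩
    · exact fun i n => he.mem i n
    · exact fun n => Subtype.ext (he.add n)
    · exact fun i n hn => Subtype.ext (he.same i n hn)
    · exact fun i j hij n hn => Subtype.ext (he.ne i j hij n hn)
  smul_mem ha hm := M.smul_mem ha hm
  d := (M.d.comp K.subtype.toAddMonoidHom).codRestrict K fun m => hKd m m.2
  d_degree i m hm := M.d_degree i m hm
  d_sq m := Subtype.ext (M.d_sq m)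
  d_supercomm i a ha m := Subtype.ext (M.d_supercomm i a ha m)

/-- The contracting homotopy: a degree 1 supercommuting map `h` with values in `I` that vanishes
on `I` and inverts `d` on `d(I)`.  This is where the injectivity of `I` is used. -/
theorem exists_contraction [GradedRing 𝒜] (M : Duplex.{u, v} A 𝒜 c)
    (I : Submodule A M.carrier)
    (e : ZMod 2 → M.carrier →+ M.carrier) (he : IsProjFamily M.grading e)
    (hIe : ∀ i, ∀ x ∈ I, e i x ∈ I)
    (hinj : Module.Injective A I)
    (hdinj : ∀ x ∈ I, M.d x = 0 → x = 0)
    (hd : ∀ x ∈ I, ∀ y ∈ I, x = M.d y → x = 0) :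
    ∃ h : M.carrier →+ M.carrier,
      (∀ i : ZMod 2, ∀ m ∈ M.grading i, h m ∈ M.grading (i + 1)) ∧
      (∀ (i : ZMod 2) (a : A), a ∈ 𝒜 i → ∀ m, h (a • m) = ((-1 : ℤ) ^ i.val) • (a • h m)) ∧
      (∀ m, h m ∈ I) ∧ (∀ x ∈ I, h x = 0) ∧ (∀ x ∈ I, h (M.d x) = x) := by
  have h01 : (0 : ZMod 2) ≠ 1 := by decide
  have h11 : (1 : ZMod 2) + 1 = 0 := by decide
  have s00 := fun {a : A} (ha : a ∈ 𝒜 0) (m : M.carrier) => by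
    simpa using Duplex.proj_smul he ha 0 m
  have s01 := fun {a : A} (ha : a ∈ 𝒜 0) (m : M.carrier) => by
    simpa using Duplex.proj_smul he ha 1 m
  have s10 := fun {a : A} (ha : a ∈ 𝒜 1) (m : M.carrier) => by
    simpa using Duplex.proj_smul he ha 0 m
  have s11 := fun {a : A} (ha : a ∈ 𝒜 1) (m : M.carrier) => by
    simpa [h11] using Duplex.proj_smul he ha 1 m
  have d0 := fun (m : M.carrier) => by simpa using Duplex.proj_d he 0 m
  have d1 := fun (m : M.carrier) => by simpa [h11] using Duplex.proj_d he 1 m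
  have dc0 : ∀ a ∈ 𝒜 0, ∀ m, M.d (a • m) = a • M.d m := fun a ha m => by
    simpa using M.d_supercomm 0 a ha m
  have dc1 : ∀ a ∈ 𝒜 1, ∀ m, M.d (a • m) = -(a • M.d m) := fun a ha m => by
    simpa [ZMod.val_one] using M.d_supercomm 1 a ha m
  let σ : M.carrier →+ M.carrier := e 0 - e 1
  have hσ : ∀ m, σ m = e 0 m - e 1 m := fun m => rfl
  have hσI : ∀ x ∈ I, σ x ∈ I := fun x hx => I.sub_mem (hIe 0 x hx) (hIe 1 x hx)
  have hσ0 : ∀ m, σ m = 0 → m = 0 := by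
    intro m hm
    rw [hσ, sub_eq_zero] at hm
    have h1 : e 0 m = 0 := by
      rw [← he.same 0 _ (he.mem 0 m), hm]
      exact he.ne 1 0 h01.symm _ (he.mem 1 m)
    rw [← he.add m, ← hm, h1, add_zero]
  -- `d ∘ σ` as an `A`-linear map
  let D : M.carrier →ₗ[A] M.carrier :=
    { M.d.comp σ with
      map_smul' := map_smul_of_homogeneous (𝒜 := 𝒜) (M.d.comp σ) (by
        intro i a ha m
        obtain rfl | rfl := zmod2_cases i
        · simp [hσ, s00 ha, s01 ha, dc0 a ha, smul_sub]
        · simp [hσ, s10 ha, s11 ha, dc1 a ha, sub_eq_add_neg, add_comm]) }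
  have hD : ∀ m, D m = M.d (σ m) := fun m => rfl
  let F : (I × I) →ₗ[A] M.carrier := I.subtype.coprod (D.comp I.subtype)
  have hF : ∀ x, F x = x.1 + M.d (σ x.2) := fun x => rfl
  have hFinj : Function.Injective F := by
    rw [injective_iff_map_eq_zero]
    rintro ⟨x, y⟩ hxy
    rw [hF] at hxy
    have hx : (x : M.carrier) = 0 := hd x x.2 (-σ y) (I.neg_mem (hσI y y.2)) (by
      rw [map_neg]; exact eq_neg_of_add_eq_zero_left hxy)
    have hy : (y : M.carrier) = 0 := hσ0 _ (hdinj _ (hσI y y.2) (by simpa [hx] using hxy))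
    ext
    · exact hx
    · exact hy
  obtain ⟨H', hH'⟩ := hinj.out F hFinj (LinearMap.snd A I I)
  let H : M.carrier →ₗ[A] M.carrier := I.subtype.comp H'
  have HI : ∀ m, H m ∈ I := fun m => (H' m).2
  have H0 : ∀ x ∈ I, H x = 0 := by
    intro x hx
    have := congrArg Subtype.val (hH' (⟨x, hx⟩, 0))
    simpa [H, hF] using this
  have HD : ∀ y ∈ I, H (M.d (σ y)) = y := by
    intro y hy
    have := congrArg Subtype.val (hH' (0, ⟨y, hy⟩))
    simpa [H, hF] using this
  have σ0 : ∀ m, σ (e 0 m) = e 0 m := fun m => by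
    rw [hσ, he.same 0 _ (he.mem 0 m), he.ne 0 1 h01 _ (he.mem 0 m), sub_zero]
  have σ1 : ∀ m, σ (e 1 m) = -e 1 m := fun m => by
    rw [hσ, he.same 1 _ (he.mem 1 m), he.ne 1 0 h01.symm _ (he.mem 1 m), zero_sub]
  let h : M.carrier →+ M.carrier :=
    (e 0).comp (H.toAddMonoidHom.comp (e 1)) - (e 1).comp (H.toAddMonoidHom.comp (e 0))
  have hh : ∀ m, h m = e 0 (H (e 1 m)) - e 1 (H (e 0 m)) := fun m => rfl
  refine ⟨h, ?_, ?_, ?_, ?_, ?_⟩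
  · intro i m hm
    obtain rfl | rfl := zmod2_cases i
    · have hm1 : e 1 m = 0 := he.ne 0 1 h01 m hm
      simpa [hh, hm1] using he.mem 1 (H (e 0 m))
    · have hm0 : e 0 m = 0 := he.ne 1 0 h01.symm m hm
      simpa [hh, hm0, h11] using he.mem 0 (H (e 1 m))
  · intro i a ha m
    obtain rfl | rfl := zmod2_cases i
    · simp [hh, s00 ha, s01 ha, smul_sub]
    · simp [hh, s10 ha, s11 ha, smul_sub, ZMod.val_one]
      abel
  · exact fun m => I.sub_mem (hIe 0 _ (HI _)) (hIe 1 _ (HI _))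
  · intro x hx
    rw [hh, H0 _ (hIe 1 x hx), H0 _ (hIe 0 x hx)]
    simp
  · intro x hx
    have a0 := HD _ (hIe 0 x hx)
    have a1 := HD _ (hIe 1 x hx)
    rw [σ0] at a0
    rw [σ1, map_neg, map_neg, neg_eq_iff_eq_neg] at a1
    rw [hh, d0, d1, a0, a1, map_neg, sub_neg_eq_add, he.same 0 _ (he.mem 0 x),
      he.same 1 _ (he.mem 1 x)]
    exact he.add x

/-- Let `M` be an `(A,c)`-duplex and `I` an injective ℤ/2ℤ-graded
`A`-submodule of `M` on which `d` is injective, with `I ∩ d(I) = 0`. Then `M` is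
isomorphic in `K₂(A,c)` to its quotient by the subduplex generated by `I`: there is
a duplex `Q` and a surjective morphism `π : M → Q` whose kernel is exactly
`I ⊕ d(I)` (graded by `I⁰ ⊕ d(I¹)` and `I¹ ⊕ d(I⁰)`), with the induced grading,
such that `π` is an isomorphism in the homotopy category. -/
theorem homotopyIso_quot_by_injective
    [GradedRing 𝒜] (hc : c ∈ 𝒜 0) (hc_central : ∀ a : A, c * a = a * c)
    (M : Duplex.{u, v} A 𝒜 c) (I : Submodule A M.carrier)
    -- `I` is a graded submodule of `M`
    (hgr : ∀ x ∈ I, ∃ x0 ∈ I, ∃ x1 ∈ I,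
      x0 ∈ M.grading 0 ∧ x1 ∈ M.grading 1 ∧ x = x0 + x1)
    -- `I` is an injective (ℤ/2ℤ-graded) `A`-module
    (hinj : Module.Injective A I)
    -- `d` is injective on `I`
    (hdinj : ∀ x ∈ I, M.d x = 0 → x = 0)
    -- `I ∩ d(I) = 0`
    (hd : ∀ x ∈ I, ∀ y ∈ I, x = M.d y → x = 0) :
    ∃ (Q : Duplex.{u, v} A 𝒜 c) (π : M.carrier →ₗ[A] Q.carrier),
      IsDuplexMorphism M Q π ∧
      Function.Surjective π ∧
      -- the kernel of `π` is the subduplex generated by `I`, namely `I + d(I)`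
      (∀ m : M.carrier, π m = 0 ↔ ∃ x ∈ I, ∃ y ∈ I, m = x + M.d y) ∧
      -- `Q` carries the quotient grading
      (∀ k : ZMod 2, ∀ q ∈ Q.grading k, ∃ m ∈ M.grading k, π m = q) ∧
      -- `π` becomes an isomorphism in the homotopy category
      (∃ g : Q.carrier →ₗ[A] M.carrier,
        IsDuplexMorphism Q M g ∧
        IsNullHomotopic M M (g ∘ₗ π - LinearMap.id) ∧
        IsNullHomotopic Q Q (π ∘ₗ g - LinearMap.id)) := by
  obtain ⟨e, he⟩ := exists_isProjFamily M.decomp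
  have h01 : (0 : ZMod 2) ≠ 1 := by decide
  have hIe : ∀ i, ∀ x ∈ I, e i x ∈ I := by
    intro i x hx
    obtain ⟨x0, hx0, x1, hx1, g0, g1, rfl⟩ := hgr x hx
    rw [map_add]
    obtain rfl | rfl := zmod2_cases i
    · have h1 := he.same 0 x0 g0
      have h2 := he.ne 1 0 h01.symm x1 g1
      simpa [h1, h2] using hx0
    · have h1 := he.same 1 x1 g1
      have h2 := he.ne 0 1 h01 x0 g0
      simpa [h1, h2] using hx1
  obtain ⟨h, hdeg, hsup, hhI, hh0, hhd⟩ := exists_contraction M I e he hIe hinj hdinj hd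
  have hcsmul : ∀ m, h (c • m) = c • h m := fun m => by simpa using hsup 0 c hc m
  -- the projection `p = h d + d h` of `M` onto `I + d(I)`
  let p : M.carrier →ₗ[A] M.carrier :=
    { h.comp M.d + M.d.comp h with
      map_smul' := map_smul_of_homogeneous (𝒜 := 𝒜) (h.comp M.d + M.d.comp h) (by
        intro i a ha m
        have hs : ((-1 : ℤ) ^ i.val) * ((-1 : ℤ) ^ i.val) = 1 := by
          rw [← mul_pow]; simp
        simp only [AddMonoidHom.add_apply, AddMonoidHom.comp_apply, M.d_supercomm i a ha,
          hsup i a ha, map_zsmul, smul_smul, hs, one_smul, smul_add]) }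
  have hp : ∀ m, p m = h (M.d m) + M.d (h m) := fun m => rfl
  have hpd : ∀ m, p (M.d m) = M.d (p m) := by
    intro m
    rw [hp, hp, M.d_sq, hcsmul, map_add, M.d_sq, add_comm]
  have hpI : ∀ x ∈ I, p x = x := by
    intro x hx
    rw [hp, hhd x hx, hh0 x hx, map_zero, add_zero]
  have hpdI : ∀ x ∈ I, p (M.d x) = M.d x := fun x hx => by rw [hpd, hpI x hx]
  have hpp : ∀ m, p (p m) = p m := by
    intro m
    conv_lhs => rw [hp m]
    rw [map_add, hpI _ (hhI _), hpdI _ (hhI _), hp]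
  have hpdeg : ∀ i, ∀ m ∈ M.grading i, p m ∈ M.grading i := by
    intro i m hm
    have h2 : i + 1 + 1 = i := by
      rw [add_assoc, show (1 : ZMod 2) + 1 = 0 by decide, add_zero]
    have m1 := hdeg _ _ (M.d_degree _ _ hm)
    have m2 := M.d_degree _ _ (hdeg _ _ hm)
    rw [h2] at m1 m2
    exact (M.grading i).add_mem m1 m2
  have hpe : ∀ i m, e i (p m) = p (e i m) := fun i m => by
    simpa using he.map_proj p.toAddMonoidHom 0 (fun j n hn => by
      rw [zero_add]; exact hpdeg j n hn) i m
  let K : Submodule A M.carrier := LinearMap.ker p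
  have hK : ∀ m, m ∈ K ↔ p m = 0 := fun m => LinearMap.mem_ker
  let Q : Duplex.{u, v} A 𝒜 c := M.sub K e he
    (fun i m hm => by rw [hK] at hm ⊢; rw [← hpe, hm, map_zero])
    (fun m hm => by rw [hK] at hm ⊢; rw [hpd, hm, map_zero])
  let π : M.carrier →ₗ[A] K := (LinearMap.id - p).codRestrict K (fun m => by
    rw [hK, LinearMap.sub_apply, LinearMap.id_apply, map_sub, hpp, sub_self])
  have hπ : ∀ m, (π m : M.carrier) = m - p m := fun m => rfl
  have hπK : ∀ q : K, π q = q := fun q => Subtype.ext (by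
    rw [hπ, (hK _).1 q.2, sub_zero])
  refine ⟨Q, π, ⟨?_, ?_⟩, ?_, ?_, ?_, K.subtype, ⟨?_, ?_⟩, ⟨-h, ?_, ?_, ?_⟩, ⟨0, ?_, ?_, ?_⟩⟩
  · exact fun i m hm => (M.grading i).sub_mem hm (hpdeg i m hm)
  · intro m
    apply Subtype.ext
    change M.d m - p (M.d m) = M.d (m - p m)
    rw [hpd, map_sub]
  · exact fun q => ⟨q.1, hπK q⟩
  · intro m
    constructor
    · intro hm
      have hm' : m - p m = 0 := congrArg Subtype.val hm
      exact ⟨h (M.d m), hhI _, h m, hhI _, sub_eq_zero.1 hm'⟩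
    · rintro ⟨x, hx, y, hy, rfl⟩
      apply Subtype.ext
      change x + M.d y - p (x + M.d y) = 0
      rw [map_add p, hpI x hx, hpdI y hy, sub_self]
  · exact fun k q hq => ⟨q.1, hq, hπK q⟩
  · exact fun i m hm => hm
  · exact fun m => rfl
  · exact fun i m hm => (M.grading _).neg_mem (hdeg i m hm)
  · intro i a ha m
    simp [hsup i a ha m]
  · intro m
    change m - p m - m = -h (M.d m) + M.d (-h m)
    rw [hp, map_neg]
    abel
  · exact fun i m hm => (Q.grading _).zero_mem
  · intro i a ha m
    simp
  · intro m
    have hm : π (K.subtype m) = m := hπK m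
    simp only [LinearMap.sub_apply, LinearMap.id_apply,
      AddMonoidHom.zero_apply, map_zero, add_zero]
    exact sub_eq_zero.2 hm
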